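/- Let u, v ∈ F₂ with ‖u‖ ≥ ‖v‖, let ψ be a chain of type (C1), and put k = ‖u‖+1. Suppose that for every chain ψ' of type (C1) with |ψ'| ≤ |ψ| one has: ‖σ^{k+1}ψ'(u)‖ = ‖σ^{k}ψ'(u)‖ if and only if ‖σ^{k+1}ψ'(v)‖ = ‖σ^{k}ψ'(v)‖, and ‖τ^{k+1}ψ'(u)‖ = ‖τ^{k}ψ'(u)‖ if and only if ‖τ^{k+1}ψ'(v)‖ = ‖τ^{k}ψ'(v)‖. If ψ contains at least ‖u‖+1 factors of σ, then ‖σψ(u)‖ = ‖ψ(u)‖ if and only if ‖σψ(v)‖ = ‖ψ(v)‖. -/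

import Mathlib

noncomputable section

/-- The free group of rank two. -/
abbrev F : Type := FreeGroup (Fin 2)

/-- The generator `a`. -/
def ga : F := FreeGroup.of 0

/-- The generator `b`. -/
def gb : F := FreeGroup.of 1

/-- Build an automorphism of `F` from images of the generators together with
an explicit inverse. -/
def mkAut (x y xi yi : F)
    (h1 : FreeGroup.lift ![xi, yi] x = ga)
    (h2 : FreeGroup.lift ![xi, yi] y = gb)
    (h3 : FreeGroup.lift ![x, y] xi = ga)
    (h4 : FreeGroup.lift ![x, y] yi = gb) : MulAut F :=
  MonoidHom.toMulEquiv (FreeGroup.lift ![x, y]) (FreeGroup.lift ![xi, yi])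
    (by
      ext i
      fin_cases i
      · simpa [ga] using h1
      · simpa [gb] using h2)
    (by
      ext i
      fin_cases i
      · simpa [ga] using h3
      · simpa [gb] using h4)

/-- `σ : a ↦ ab, b ↦ b`. -/
def σ : MulAut F :=
  mkAut (ga * gb) gb (ga * gb⁻¹) gb
    (by simp [ga, gb]) (by simp [ga, gb]) (by simp [ga, gb]) (by simp [ga, gb])

/-- `τ : a ↦ a, b ↦ ba`. -/
def τ : MulAut F :=
  mkAut ga (gb * ga) ga (gb * ga⁻¹)
    (by simp [ga, gb]) (by simp [ga, gb]) (by simp [ga, gb]) (by simp [ga, gb])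

/-- `δ₁ : a ↦ b⁻¹ab, b ↦ b`. -/
def δ₁ : MulAut F :=
  mkAut (gb⁻¹ * ga * gb) gb (gb * ga * gb⁻¹) gb
    (by simp [ga, gb, mul_assoc]) (by simp [ga, gb]) (by simp [ga, gb, mul_assoc]) (by simp [ga, gb])

/-- `δ₂ : a ↦ bab⁻¹, b ↦ b`. -/
def δ₂ : MulAut F :=
  mkAut (gb * ga * gb⁻¹) gb (gb⁻¹ * ga * gb) gb
    (by simp [ga, gb, mul_assoc]) (by simp [ga, gb]) (by simp [ga, gb, mul_assoc]) (by simp [ga, gb])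

/-- `δ₃ : a ↦ a, b ↦ a⁻¹ba`. -/
def δ₃ : MulAut F :=
  mkAut ga (ga⁻¹ * gb * ga) ga (ga * gb * ga⁻¹)
    (by simp [ga, gb]) (by simp [ga, gb, mul_assoc]) (by simp [ga, gb]) (by simp [ga, gb, mul_assoc])

/-- `δ₄ : a ↦ a, b ↦ aba⁻¹`. -/
def δ₄ : MulAut F :=
  mkAut ga (ga * gb * ga⁻¹) ga (ga⁻¹ * gb * ga)
    (by simp [ga, gb]) (by simp [ga, gb, mul_assoc]) (by simp [ga, gb]) (by simp [ga, gb, mul_assoc])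

/-- `π : a ↦ b, b ↦ a⁻¹`. -/
def pi' : MulAut F :=
  mkAut gb ga⁻¹ gb⁻¹ ga
    (by simp [ga, gb]) (by simp [ga, gb]) (by simp [ga, gb]) (by simp [ga, gb])

/-- Word length of (the reduced word representing) an element of `F`. -/
def len (w : F) : ℕ := w.toWord.length

/-- Cyclic length: minimal word length among all conjugates. -/
def cyclen (w : F) : ℕ := sInf {n | ∃ g : F, len (g * w * g⁻¹) = n}

/-- The chain `τ^{m_k}σ^{l_k}⋯τ^{m_1}σ^{l_1}` of type (C1) determined by the list
`[(l_k, m_k), …, (l_1, m_1)]` of pairs of exponents. -/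
def chainC1 (c : List (ℕ × ℕ)) : MulAut F :=
  (c.map fun p => τ ^ p.2 * σ ^ p.1).prod

/-- The chain `τ^{-m_k}σ^{-l_k}⋯τ^{-m_1}σ^{-l_1}` of type (C2) determined by the list
`[(l_k, m_k), …, (l_1, m_1)]` of pairs of exponents. -/
def chainC2 (c : List (ℕ × ℕ)) : MulAut F :=
  (c.map fun p => (τ ^ p.2)⁻¹ * (σ ^ p.1)⁻¹).prod

/-- Number of factors of `σ` in a chain. -/
def sigmaCount (c : List (ℕ × ℕ)) : ℕ := (c.map Prod.fst).sum

/-- Number of factors of `τ` in a chain. -/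
def tauCount (c : List (ℕ × ℕ)) : ℕ := (c.map Prod.snd).sum

/-- The length `Σ (l_i + m_i)` of a chain. -/
def chainLen (c : List (ℕ × ℕ)) : ℕ := sigmaCount c + tauCount c

/-- A Whitehead automorphism of type (W1): it permutes `{a, a⁻¹, b, b⁻¹}`. -/
def IsW1 (β : MulAut F) : Prop :=
  β ga ∈ ({ga, ga⁻¹, gb, gb⁻¹} : Set F) ∧ β gb ∈ ({ga, ga⁻¹, gb, gb⁻¹} : Set F)

/-- A chain of type (C1). -/
def IsC1 (φ : MulAut F) : Prop := ∃ c : List (ℕ × ℕ), c ≠ [] ∧ φ = chainC1 c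

/-- A chain of type (C2). -/
def IsC2 (φ : MulAut F) : Prop := ∃ c : List (ℕ × ℕ), c ≠ [] ∧ φ = chainC2 c

/-- A positive element: a product of the generators `a` and `b`. -/
def IsPositive (w : F) : Prop := w ∈ Submonoid.closure ({ga, gb} : Set F)

/-- The four automorphisms `δ₁, δ₂, δ₃, δ₄`. -/
def δIdx : Fin 4 → MulAut F := ![δ₁, δ₂, δ₃, δ₄]

/-! ### Cyclic length of cyclically reduced words -/

open FreeGroup in
theorem len_mk_of_isReduced {L : List (Fin 2 × Bool)} (h : IsReduced L) :
    len (FreeGroup.mk L) = L.length := by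
  unfold len
  rw [toWord_mk, h.reduce_eq]

theorem len_mul_le (x y : F) : len (x * y) ≤ len x + len y := FreeGroup.norm_mul_le x y

theorem len_inv (x : F) : len x⁻¹ = len x := FreeGroup.norm_inv_eq

theorem len_pow_le (x : F) (n : ℕ) : len (x ^ n) ≤ n * len x := by
  induction n with
  | zero => simp [len]
  | succ n ih =>
    rw [pow_succ]
    have := len_mul_le (x ^ n) x
    nlinarith

theorem cyclen_mk {L : List (Fin 2 × Bool)} (h : FreeGroup.IsCyclicallyReduced L) :
    cyclen (FreeGroup.mk L) = L.length := by
  apply le_antisymm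
  · apply Nat.sInf_le
    exact ⟨1, by simpa using len_mk_of_isReduced h.1⟩
  · apply le_csInf
    · exact ⟨_, 1, rfl⟩
    · rintro n ⟨g, rfl⟩
      set w := FreeGroup.mk L with hw
      have key : ∀ k : ℕ, k * L.length ≤ k * len (g * w * g⁻¹) + 2 * len g := by
        intro k
        have h1 : len (w ^ k) = k * L.length := by
          rw [hw, FreeGroup.pow_mk, len_mk_of_isReduced (h.flatten_replicate k).1]
          simp
        have h2 : w ^ k = g⁻¹ * (g * w * g⁻¹) ^ k * g := by
          rw [conj_pow]; group
        have h3 := len_mul_le (g⁻¹ * (g * w * g⁻¹) ^ k) g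
        have h4 := len_mul_le g⁻¹ ((g * w * g⁻¹) ^ k)
        have h5 := len_pow_le (g * w * g⁻¹) k
        rw [len_inv] at h4
        rw [← h1, h2]
        omega
      by_contra hlt
      push Not at hlt
      have := key (2 * len g + 1)
      nlinarith

theorem cyclen_conj {x y : F} (h : IsConj x y) : cyclen x = cyclen y := by
  obtain ⟨c, rfl⟩ := isConj_iff.1 h
  unfold cyclen
  congr 1
  ext n
  constructor
  · rintro ⟨g, rfl⟩
    exact ⟨g * c⁻¹, by congr 1; group⟩
  · rintro ⟨g, rfl⟩
    exact ⟨g * c, by congr 1; group⟩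

theorem exists_cycRed (w : F) : ∃ L, FreeGroup.IsCyclicallyReduced L ∧ IsConj w (FreeGroup.mk L) := by
  refine ⟨FreeGroup.reduceCyclically w.toWord,
    FreeGroup.reduceCyclically.isCyclicallyReduced FreeGroup.isReduced_toWord, ?_⟩
  have h := FreeGroup.reduceCyclically.conj_conjugator_reduceCyclically w.toWord
  have h2 := congrArg FreeGroup.mk h
  rw [FreeGroup.mk_toWord, ← FreeGroup.mul_mk, ← FreeGroup.mul_mk, ← FreeGroup.inv_mk] at h2
  apply IsConj.symm
  rw [isConj_iff]
  exact ⟨_, h2⟩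

theorem isConj_mk_append (A B : List (Fin 2 × Bool)) :
    IsConj (FreeGroup.mk (A ++ B)) (FreeGroup.mk (B ++ A)) := by
  rw [isConj_iff]
  refine ⟨(FreeGroup.mk A)⁻¹, ?_⟩
  rw [← FreeGroup.mul_mk, ← FreeGroup.mul_mk]
  group

theorem cycRed_cons (x : Fin 2 × Bool) (R : List (Fin 2 × Bool)) :
    FreeGroup.IsCyclicallyReduced (x :: R) ↔ FreeGroup.IsReduced (x :: R ++ [x]) := by
  unfold FreeGroup.IsCyclicallyReduced FreeGroup.IsReduced
  rw [List.isChain_append]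
  simp

theorem cycRed_swap {A B : List (Fin 2 × Bool)} (h : FreeGroup.IsCyclicallyReduced (A ++ B)) :
    FreeGroup.IsCyclicallyReduced (B ++ A) := by
  rcases A with _ | ⟨x, A⟩
  · simpa using h
  rcases B with _ | ⟨y, B⟩
  · simpa using h
  rw [List.cons_append, cycRed_cons] at h ⊢
  unfold FreeGroup.IsReduced at *
  have e1 : x :: (A ++ y :: B) ++ [x] = (x :: A) ++ ((y :: B) ++ [x]) := by simp
  have e2 : y :: (B ++ x :: A) ++ [y] = (y :: B) ++ ((x :: A) ++ [y]) := by simp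
  rw [e1, List.isChain_append] at h
  rw [e2, List.isChain_append]
  obtain ⟨h1, h2, h3⟩ := h
  rw [List.isChain_append] at h2 ⊢
  simp_all

/-! ### Syllable representations -/

def sg (e : Bool) : ℤ := if e then 1 else -1

def rp (g : Fin 2) (n : ℤ) : List (Fin 2 × Bool) := List.replicate n.natAbs (g, decide (0 < n))

def flat (g g' : Fin 2) : List (Bool × ℤ) → List (Fin 2 × Bool)
  | [] => []
  | x :: l => (g, x.1) :: (rp g' x.2 ++ flat g g' l)

def hd (z : Bool) : List (Bool × ℤ) → Bool
  | [] => z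
  | x :: _ => x.1

def sh (e e2 : Bool) : ℤ := if e = e2 then sg e else 0

def tw (z : Bool) : List (Bool × ℤ) → List (Bool × ℤ)
  | [] => []
  | x :: l => (x.1, x.2 + sh x.1 (hd z l)) :: tw z l

def Rd (z : Bool) : List (Bool × ℤ) → Prop
  | [] => True
  | x :: l => (x.2 = 0 → x.1 = hd z l) ∧ Rd z l

def cst (e : Bool) (n : ℤ) (e2 : Bool) : ℤ := if e = e2 then max 0 (-(sg e * n)) else 0

def TT (z : Bool) : List (Bool × ℤ) → ℤ
  | [] => 0
  | x :: l => cst x.1 x.2 (hd z l) + TT z l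

def CC (z : Bool) : List (Bool × ℤ) → ℕ
  | [] => 0
  | x :: l => (if x.1 = hd z l then 1 else 0) + CC z l

theorem hd_tw (z y : Bool) (l : List (Bool × ℤ)) : hd y (tw z l) = hd y l := by
  cases l <;> rfl

theorem Rd_tw (z : Bool) (l : List (Bool × ℤ)) (h : Rd z l) : Rd z (tw z l) := by
  induction l with
  | nil => trivial
  | cons x l ih =>
    refine ⟨?_, ih h.2⟩
    have h1 := h.1
    simp only [hd_tw, sh]
    intro h0
    by_contra hne
    rw [if_neg hne] at h0
    exact hne (h1 (by omega))

theorem TT_tw (z : Bool) (l : List (Bool × ℤ)) :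
    0 ≤ TT z l ∧ 0 ≤ TT z (tw z l) ∧ TT z (tw z l) ≤ max 0 (TT z l - 1) := by
  induction l with
  | nil => simp [TT, tw]
  | cons x l ih =>
    obtain ⟨e, n⟩ := x
    simp only [TT, tw, hd_tw]
    generalize hd z l = e2 at *
    cases e <;> cases e2 <;> simp [cst, sh, sg] <;> omega

theorem CC_tw (z : Bool) (l : List (Bool × ℤ)) : CC z (tw z l) = CC z l := by
  induction l with
  | nil => rfl
  | cons x l ih => simp [CC, tw, hd_tw, ih]

theorem length_flat_tw (g g' : Fin 2) (z : Bool) (l : List (Bool × ℤ)) (h : TT z l ≤ 0) :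
    (flat g g' (tw z l)).length = (flat g g' l).length + CC z l := by
  induction l with
  | nil => rfl
  | cons x l ih =>
    obtain ⟨e, n⟩ := x
    have h0 := (TT_tw z l).1
    simp only [TT] at h
    have hc : 0 ≤ cst e n (hd z l) := by unfold cst; split_ifs <;> simp
    have := ih (by omega)
    simp only [tw, flat, CC, List.length_cons, List.length_append, rp, List.length_replicate, this]
    have hc2 : cst e n (hd z l) ≤ 0 := by omega
    clear hc h
    generalize hd z l = e2 at *
    cases e <;> cases e2 <;> simp [cst, sh, sg] at hc2 ⊢ <;> omega

theorem flat_append_cons (g g' : Fin 2) (z : Bool) (l : List (Bool × ℤ)) :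
    ∃ t, flat g g' l ++ [(g, z)] = (g, hd z l) :: t := by
  cases l with
  | nil => exact ⟨[], rfl⟩
  | cons x l => exact ⟨_, rfl⟩

theorem isReduced_replicate_append {y x : Fin 2 × Bool} (hy : y.1 ≠ x.1) (k : ℕ)
    (t : List (Fin 2 × Bool)) :
    FreeGroup.IsReduced (List.replicate (k + 1) y ++ x :: t) ↔ FreeGroup.IsReduced (x :: t) := by
  induction k with
  | zero => simp [FreeGroup.isReduced_cons_cons, hy]
  | succ k ih =>
    rw [← ih, List.replicate_succ (n := k + 1), List.replicate_succ]
    simp [FreeGroup.isReduced_cons_cons]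

theorem isReduced_block {g g' : Fin 2} (hg : g' ≠ g) (e e2 : Bool) (n : ℤ)
    (t : List (Fin 2 × Bool)) :
    FreeGroup.IsReduced ((g, e) :: (rp g' n ++ (g, e2) :: t)) ↔
      (n = 0 → e = e2) ∧ FreeGroup.IsReduced ((g, e2) :: t) := by
  unfold rp
  rcases hn : n.natAbs with _ | k
  · have : n = 0 := by omega
    simp [this, FreeGroup.isReduced_cons_cons]
  · have h0 : n ≠ 0 := by rintro rfl; simp at hn
    have := isReduced_replicate_append (y := (g', decide (0 < n))) (x := (g, e2)) hg k t
    rw [← this, List.replicate_succ, List.cons_append, FreeGroup.isReduced_cons_cons]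
    simp [h0, hg.symm]

theorem isReduced_flat {g g' : Fin 2} (hg : g' ≠ g) (z : Bool) (l : List (Bool × ℤ)) :
    FreeGroup.IsReduced (flat g g' l ++ [(g, z)]) ↔ Rd z l := by
  induction l with
  | nil => simp [flat, Rd]
  | cons x l ih =>
    obtain ⟨t, ht⟩ := flat_append_cons g g' z l
    simp only [flat, List.cons_append, List.append_assoc, Rd]
    rw [ht, isReduced_block hg, ← ht, ih]

theorem cycRed_flat {g g' : Fin 2} (hg : g' ≠ g) (x : Bool × ℤ) (l : List (Bool × ℤ)) :
    FreeGroup.IsCyclicallyReduced (flat g g' (x :: l)) ↔ Rd x.1 (x :: l) := by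
  rw [← isReduced_flat hg]
  exact cycRed_cons _ _

theorem exists_flat_aux {g g' : Fin 2} (hgg : ∀ i : Fin 2, i ≠ g → i = g')
    (L : List (Fin 2 × Bool)) (h : FreeGroup.IsReduced L) :
    ∃ n l, L = rp g' n ++ flat g g' l := by
  induction L with
  | nil => exact ⟨0, [], rfl⟩
  | cons x L ih =>
    obtain ⟨n, l, rfl⟩ := ih (List.IsChain.tail h)
    obtain ⟨i, e⟩ := x
    by_cases hi : i = g
    · subst hi
      exact ⟨0, (e, n) :: l, rfl⟩
    · have := hgg i hi
      subst this
      by_cases hn : n = 0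
      · subst hn
        refine ⟨sg e, l, ?_⟩
        cases e <;> simp [sg, rp]
      · refine ⟨n + sg e, l, ?_⟩
        have he : e = decide (0 < n) := by
          unfold rp at h
          rcases hk : n.natAbs with _ | k
          · omega
          · rw [hk, List.replicate_succ, List.cons_append, FreeGroup.isReduced_cons_cons] at h
            exact h.1 rfl
        unfold rp
        rw [← List.cons_append, he, ← List.replicate_succ]
        rcases lt_or_gt_of_ne hn with h1 | h1
        · have e1 : decide (0 < n) = false := by simp; omega
          have e2 : decide (0 < n + sg false) = false := by simp [sg]; omega
          rw [e1, e2]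
          congr 2
          simp [sg]; omega
        · have e1 : decide (0 < n) = true := by simp; omega
          have e2 : decide (0 < n + sg true) = true := by simp [sg]; omega
          rw [e1, e2]
          congr 2
          simp [sg]; omega

theorem exists_flat {g g' : Fin 2} (hgg : ∀ i : Fin 2, i ≠ g → i = g') (hg : g' ≠ g)
    (e : Bool) (L : List (Fin 2 × Bool)) (h : FreeGroup.IsCyclicallyReduced ((g, e) :: L)) :
    ∃ n l, (g, e) :: L = flat g g' ((e, n) :: l) ∧ Rd e ((e, n) :: l) := by
  obtain ⟨n, l, rfl⟩ := exists_flat_aux hgg L (List.IsChain.tail h.1)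
  refine ⟨n, l, rfl, ?_⟩
  exact (cycRed_flat hg (e, n) l).1 h

/-! ### Twists -/

theorem mk_rp (g : Fin 2) (n : ℤ) : FreeGroup.mk (rp g n) = (FreeGroup.of g : F) ^ n := by
  have hp : ∀ k : ℕ, FreeGroup.mk (List.replicate k (g, true)) = (FreeGroup.of g : F) ^ k := by
    intro k
    induction k with
    | zero => rfl
    | succ k ih =>
      rw [List.replicate_succ, pow_succ', ← ih]; rfl
  have hm : ∀ k : ℕ, FreeGroup.mk (List.replicate k (g, false)) = ((FreeGroup.of g : F)⁻¹) ^ k := by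
    intro k
    induction k with
    | zero => rfl
    | succ k ih =>
      rw [List.replicate_succ, pow_succ', ← ih]; rfl
  unfold rp
  rcases lt_trichotomy n 0 with h | h | h
  · have : decide (0 < n) = false := by simp; omega
    rw [this, hm]
    conv_rhs => rw [show n = -(n.natAbs : ℤ) by omega]
    rw [zpow_neg, zpow_natCast, inv_pow]
  · subst h; rfl
  · have : decide (0 < n) = true := by simp; omega
    rw [this, hp]
    conv_rhs => rw [show n = (n.natAbs : ℤ) by omega]
    simp only [zpow_natCast]

def kap (e : Bool) : ℤ := if e then 0 else -1

theorem twist_flat {g g' : Fin 2} (φ : MulAut F)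
    (h1 : φ (FreeGroup.of g) = FreeGroup.of g * FreeGroup.of g')
    (h2 : φ (FreeGroup.of g') = FreeGroup.of g') (z : Bool) (l : List (Bool × ℤ)) :
    φ (FreeGroup.mk (flat g g' l)) = (FreeGroup.of g') ^ (kap (hd z l)) *
      FreeGroup.mk (flat g g' (tw z l)) * ((FreeGroup.of g') ^ (kap z))⁻¹ := by
  induction l with
  | nil =>
    simp only [flat, tw, hd, ← FreeGroup.one_eq_mk]
    simp
  | cons x l ih =>
    obtain ⟨e, n⟩ := x
    have e1 : ∀ m l', FreeGroup.mk (flat g g' ((e, m) :: l')) =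
        (FreeGroup.of g : F) ^ (sg e) * (FreeGroup.of g' : F) ^ m * FreeGroup.mk (flat g g' l') := by
      intro m l'
      have : flat g g' ((e, m) :: l') = [(g, e)] ++ rp g' m ++ flat g g' l' := by simp [flat]
      rw [this, ← FreeGroup.mul_mk, ← FreeGroup.mul_mk, mk_rp]
      congr 2
      cases e
      · simp [sg]; rfl
      · simp [sg]; rfl
    simp only [tw]
    rw [e1, e1, map_mul, map_mul, map_zpow, map_zpow, h1, h2, ih]
    generalize hd z l = e2
    generalize FreeGroup.mk (flat g g' (tw z l)) = W
    have e3 : sh e e2 = (if e then 1 else 0) + kap e2 := by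
      cases e <;> cases e2 <;> rfl
    rw [e3]
    simp only [hd]
    cases e
    · simp only [sg, kap, Bool.false_eq_true, if_false]
      group
    · simp only [sg, kap, if_true]
      group

theorem twist_flat_conj {g g' : Fin 2} (φ : MulAut F)
    (h1 : φ (FreeGroup.of g) = FreeGroup.of g * FreeGroup.of g')
    (h2 : φ (FreeGroup.of g') = FreeGroup.of g') (x : Bool × ℤ) (l : List (Bool × ℤ)) :
    IsConj (φ (FreeGroup.mk (flat g g' (x :: l)))) (FreeGroup.mk (flat g g' (tw x.1 (x :: l)))) := by
  rw [twist_flat φ h1 h2 x.1]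
  apply IsConj.symm
  rw [isConj_iff]
  exact ⟨_, rfl⟩

theorem σ_a : σ (FreeGroup.of 0) = FreeGroup.of 0 * FreeGroup.of 1 := by
  simp [σ, mkAut, ga, gb]
theorem σ_b : σ (FreeGroup.of 1) = FreeGroup.of 1 := by
  simp [σ, mkAut, ga, gb]
theorem τ_b : τ (FreeGroup.of 1) = FreeGroup.of 1 * FreeGroup.of 0 := by
  simp [τ, mkAut, ga, gb]
theorem τ_a : τ (FreeGroup.of 0) = FreeGroup.of 0 := by
  simp [τ, mkAut, ga, gb]

/-! ### Scanning a word -/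

def stp (s : Bool × ℤ) (x : Fin 2 × Bool) : Bool × ℤ :=
  if x.1 = 0 then (x.2, 0) else (s.1, s.2 + sg x.2)

def cs (s : Bool × ℤ) (x : Fin 2 × Bool) : ℤ :=
  if x.1 = 0 then cst s.1 s.2 x.2 else 0

def en : List (Fin 2 × Bool) → Bool × ℤ → Bool × ℤ
  | [], s => s
  | x :: l, s => en l (stp s x)

def co : List (Fin 2 × Bool) → Bool × ℤ → ℤ
  | [], _ => 0
  | x :: l, s => cs s x + co l (stp s x)

theorem en_append (A B : List (Fin 2 × Bool)) (s : Bool × ℤ) : en (A ++ B) s = en B (en A s) := by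
  induction A generalizing s with
  | nil => rfl
  | cons x A ih => exact ih _

theorem co_append (A B : List (Fin 2 × Bool)) (s : Bool × ℤ) :
    co (A ++ B) s = co A s + co B (en A s) := by
  induction A generalizing s with
  | nil => simp [co, en]
  | cons x A ih => simp [co, en, ih, add_assoc]

theorem cst_nonneg (e : Bool) (n : ℤ) (e2 : Bool) : 0 ≤ cst e n e2 := by
  unfold cst; split_ifs <;> simp

theorem cst_zero (e e2 : Bool) : cst e 0 e2 = 0 := by
  unfold cst; split_ifs <;> simp

theorem cs_nonneg (s : Bool × ℤ) (x : Fin 2 × Bool) : 0 ≤ cs s x := by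
  unfold cs; split_ifs
  · exact cst_nonneg _ _ _
  · exact le_rfl

theorem co_nonneg (A : List (Fin 2 × Bool)) (s : Bool × ℤ) : 0 ≤ co A s := by
  induction A generalizing s with
  | nil => simp [co]
  | cons x A ih => exact add_nonneg (cs_nonneg _ _) (ih _)

theorem en_const (A : List (Fin 2 × Bool)) (h : ∃ e, (0, e) ∈ A) (s s' : Bool × ℤ) :
    en A s = en A s' := by
  obtain ⟨e, he⟩ := h
  obtain ⟨P, Q, rfl⟩ := List.append_of_mem he
  simp [en_append, en, stp]

def CycT (L : List (Fin 2 × Bool)) (t : ℤ) : Prop := ∃ s, en L s = s ∧ co L s = t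

theorem CycT_swap {A B : List (Fin 2 × Bool)} {t : ℤ} (h : CycT (A ++ B) t) : CycT (B ++ A) t := by
  obtain ⟨s, h1, h2⟩ := h
  rw [en_append] at h1
  rw [co_append] at h2
  refine ⟨en A s, ?_, ?_⟩
  · rw [en_append, h1]
  · rw [co_append, h1]; omega

theorem en_rp1 (n : ℤ) (s : Bool × ℤ) : en (rp 1 n) s = (s.1, s.2 + n) := by
  have key : ∀ (k : ℕ) (b : Bool) (s : Bool × ℤ),
      en (List.replicate k (1, b)) s = (s.1, s.2 + k * sg b) := by
    intro k b
    induction k with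
    | zero => intro s; simp [en]
    | succ k ih =>
      intro s
      rw [List.replicate_succ, en, ih]
      simp [stp]; ring
  unfold rp
  rw [key]
  congr 2
  by_cases h : 0 < n
  · simp only [h, sg, decide_true, if_true]; omega
  · simp only [h, sg, decide_false, Bool.false_eq_true, if_false]; omega

theorem co_rp1 (n : ℤ) (s : Bool × ℤ) : co (rp 1 n) s = 0 := by
  have key : ∀ (k : ℕ) (b : Bool) (s : Bool × ℤ), co (List.replicate k (1, b)) s = 0 := by
    intro k b
    induction k with
    | zero => intro s; simp [co]
    | succ k ih =>
      intro s
      rw [List.replicate_succ, co, ih]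
      simp [cs]
  exact key _ _ _

theorem rp0_aux (k : ℕ) (b : Bool) (s : Bool × ℤ) :
    en (List.replicate (k + 1) (0, b)) s = (b, 0) ∧
    co (List.replicate (k + 1) (0, b)) s = cst s.1 s.2 b := by
  induction k generalizing s with
  | zero => simp [en, co, stp, cs]
  | succ k ih =>
    rw [List.replicate_succ]
    have := ih (b, 0)
    simp only [en, co, stp, cs, if_true, this, cst_zero]
    simp

theorem en_rp0 (n : ℤ) (hn : n ≠ 0) (s : Bool × ℤ) : en (rp 0 n) s = (decide (0 < n), 0) := by
  unfold rp
  obtain ⟨k, hk⟩ := Nat.exists_eq_add_one_of_ne_zero (Int.natAbs_ne_zero.2 hn)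
  rw [hk]; exact (rp0_aux _ _ _).1

theorem co_rp0 (n : ℤ) (hn : n ≠ 0) (s : Bool × ℤ) :
    co (rp 0 n) s = cst s.1 s.2 (decide (0 < n)) := by
  unfold rp
  obtain ⟨k, hk⟩ := Nat.exists_eq_add_one_of_ne_zero (Int.natAbs_ne_zero.2 hn)
  rw [hk]; exact (rp0_aux _ _ _).2

theorem scan_flat0 (z : Bool) (l : List (Bool × ℤ)) (s : Bool × ℤ) :
    en (flat 0 1 l ++ [(0, z)]) s = (z, 0) ∧
    co (flat 0 1 l ++ [(0, z)]) s = cst s.1 s.2 (hd z l) + TT z l := by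
  induction l generalizing s with
  | nil => simp [flat, en, co, stp, cs, hd, TT]
  | cons x l ih =>
    obtain ⟨e, n⟩ := x
    have := ih (e, n)
    simp only [flat, List.cons_append, List.append_assoc, en, co]
    rw [en_append, co_append, en_rp1, co_rp1]
    simp only [stp, cs, if_true, zero_add, this, hd, TT]
    simp

theorem CycT_flat0 (x : Bool × ℤ) (l : List (Bool × ℤ)) (t : ℤ) :
    CycT (flat 0 1 (x :: l)) t ↔ TT x.1 (x :: l) = t := by
  obtain ⟨e, n⟩ := x
  have hs := scan_flat0 e l (e, n)
  have e1 : rp 1 n ++ flat 0 1 l ++ [(0, e)] = rp 1 n ++ (flat 0 1 l ++ [(0, e)]) := by simp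
  have hen : en (rp 1 n ++ flat 0 1 l ++ [(0, e)]) (e, 0) = (e, 0) := by
    rw [e1, en_append, en_rp1]; simpa using hs.1
  have hco : co (rp 1 n ++ flat 0 1 l ++ [(0, e)]) (e, 0) = TT e ((e, n) :: l) := by
    rw [e1, co_append, co_rp1, en_rp1]; simpa [TT] using hs.2
  constructor
  · intro h
    have h' : CycT ([(0, e)] ++ (rp 1 n ++ flat 0 1 l)) t := h
    obtain ⟨s, h1, h2⟩ := CycT_swap h'
    have : s = (e, 0) := by
      rw [← h1, en_append]; simp [en, stp]
    subst this
    rw [← h2, ← hco]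
  · intro h
    have : CycT (rp 1 n ++ flat 0 1 l ++ [(0, e)]) t := ⟨_, hen, hco.trans h⟩
    exact CycT_swap this

/-! ### The simulation for `τ` -/

def pend (s : Bool × ℤ) : ℤ := max 0 (-(sg s.1 * s.2))

def RR (f : Bool) (s' s : Bool × ℤ) : Prop :=
  sg s'.1 * s'.2 ≤ 0 → s'.1 = !f → s = (s'.1, 0)

theorem sim_block (f f2 : Bool) (m : ℤ) (hm : m = 0 → f = f2) (s' s : Bool × ℤ) (h : RR f s' s) :
    RR f2 (en ((1, f) :: rp 0 (m + sh f f2)) s') (en ((1, f) :: rp 0 m) s) ∧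
    co ((1, f) :: rp 0 (m + sh f f2)) s' + pend (en ((1, f) :: rp 0 (m + sh f f2)) s')
      ≤ co ((1, f) :: rp 0 m) s + pend s' := by
  obtain ⟨e', n'⟩ := s'
  obtain ⟨e, n⟩ := s
  have a1 : ∀ k s, en ((1, f) :: rp 0 k) s = en (rp 0 k) (s.1, s.2 + sg f) := by
    intro k s; simp [en, stp]
  have a2 : ∀ k s, co ((1, f) :: rp 0 k) s = co (rp 0 k) (s.1, s.2 + sg f) := by
    intro k s; simp [co, cs, stp]
  rw [a1, a1, a2, a2]
  have z1 : ∀ s, en (rp 0 0) s = s := fun s => rfl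
  have z2 : ∀ s, co (rp 0 0) s = 0 := fun s => rfl
  by_cases hm' : m + sh f f2 = 0
  · have hff : f = f2 := by
      by_contra hne
      simp only [sh, if_neg hne] at hm'
      exact hne (hm (by omega))
    subst hff
    have hm2 : m = - sg f := by simp [sh] at hm'; omega
    have hm0 : m ≠ 0 := by cases f <;> simp [hm2, sg]
    rw [hm', z1, z2, en_rp0 m hm0, co_rp0 m hm0]
    subst hm2
    cases f <;> cases e' <;> cases e <;>
      simp [RR, pend, cst, sg] at h ⊢ <;> omega
  · rw [en_rp0 _ hm', co_rp0 _ hm']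
    have hcn := co_nonneg (rp 0 m) (e, n + sg f)
    by_cases hm0 : m = 0
    · have := hm hm0
      subst this
      subst hm0
      rw [z1, z2]
      cases f <;> cases e' <;> cases e <;>
        simp [RR, pend, cst, sg, sh] at h ⊢ <;> omega
    · rw [en_rp0 _ hm0, co_rp0 _ hm0]
      rcases lt_or_gt_of_ne hm0 with hlt | hlt <;> rcases lt_or_gt_of_ne hm' with hlt' | hlt' <;>
      cases f <;> cases f2 <;> cases e' <;> cases e <;>
        simp [RR, pend, cst, sg, sh, hlt, not_lt.2 hlt.le] at h hm' hlt' ⊢ <;> omega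

theorem sim_list (z : Bool) (l : List (Bool × ℤ)) (hl : Rd z l) (s' s : Bool × ℤ)
    (h : RR (hd z l) s' s) :
    RR z (en (flat 1 0 (tw z l)) s') (en (flat 1 0 l) s) ∧
    co (flat 1 0 (tw z l)) s' + pend (en (flat 1 0 (tw z l)) s') ≤ co (flat 1 0 l) s + pend s' := by
  induction l generalizing s' s with
  | nil => simpa [flat, tw, en, co, hd] using h
  | cons x l ih =>
    obtain ⟨f, m⟩ := x
    have e1 : ∀ (k : ℤ) l', flat 1 0 ((f, k) :: l') = ((1, f) :: rp 0 k) ++ flat 1 0 l' := by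
      intro k l'; simp [flat]
    obtain ⟨b1, b2⟩ := sim_block f (hd z l) m hl.1 s' s h
    obtain ⟨c1, c2⟩ := ih hl.2 _ _ b1
    simp only [tw]
    rw [e1, e1, en_append, en_append, co_append, co_append]
    exact ⟨c1, by linarith⟩

theorem sim_cyc (x : Bool × ℤ) (l : List (Bool × ℤ)) (hl : Rd x.1 (x :: l)) (t : ℤ)
    (h : CycT (flat 1 0 (x :: l)) t) (ha : ∃ e, (0, e) ∈ flat 1 0 (tw x.1 (x :: l))) :
    ∃ t' ≤ t, CycT (flat 1 0 (tw x.1 (x :: l))) t' := by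
  obtain ⟨s, h1, h2⟩ := h
  have r0 : RR (hd x.1 (x :: l)) (x.1, 0) s := by
    intro _ h; simp [hd] at h
  obtain ⟨r1, -⟩ := sim_list x.1 (x :: l) hl _ _ r0
  obtain ⟨-, c2⟩ := sim_list x.1 (x :: l) hl _ _ r1
  rw [h1] at c2
  have := en_const _ ha (en (flat 1 0 (tw x.1 (x :: l))) (x.1, 0)) (x.1, 0)
  rw [this, h2] at c2
  exact ⟨_, by linarith, _, this, rfl⟩

/-! ### The invariant -/

def Good (w : F) (t : ℤ) : Prop :=
  (∃ N : ℤ, IsConj w (FreeGroup.of 1 ^ N)) ∨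
  ∃ x l, IsConj w (FreeGroup.mk (flat 0 1 (x :: l))) ∧ Rd x.1 (x :: l) ∧ TT x.1 (x :: l) ≤ t

theorem isConj_map (φ : MulAut F) {x y : F} (h : IsConj x y) : IsConj (φ x) (φ y) := by
  obtain ⟨c, rfl⟩ := isConj_iff.1 h
  exact isConj_iff.2 ⟨φ c, by simp⟩

theorem mk_only (i : Fin 2) (L : List (Fin 2 × Bool)) (h : ∀ x ∈ L, x.1 = i) :
    ∃ N : ℤ, FreeGroup.mk L = (FreeGroup.of i : F) ^ N := by
  induction L with
  | nil => exact ⟨0, rfl⟩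
  | cons x L ih =>
    obtain ⟨N, hN⟩ := ih (fun y hy => h y (by simp [hy]))
    obtain ⟨j, e⟩ := x
    have hj : j = i := h (j, e) (by simp)
    subst hj
    refine ⟨sg e + N, ?_⟩
    have : (j, e) :: L = [(j, e)] ++ L := rfl
    rw [this, ← FreeGroup.mul_mk, hN, zpow_add]
    congr 1
    cases e
    · simp [sg]; rfl
    · simp [sg]; rfl

theorem good_of_cyc {w : F} {L : List (Fin 2 × Bool)} {t : ℤ} (hL : FreeGroup.IsCyclicallyReduced L)
    (hw : IsConj w (FreeGroup.mk L)) (ht : (∃ e, (0, e) ∈ L) → ∃ t' ≤ t, CycT L t') : Good w t := by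
  by_cases ha : ∃ e, (0, e) ∈ L
  · obtain ⟨t', ht', hc⟩ := ht ha
    obtain ⟨e, he⟩ := ha
    obtain ⟨P, Q, rfl⟩ := List.append_of_mem he
    have hL' := cycRed_swap hL
    have hw' := hw.trans (isConj_mk_append _ _)
    have hc' := CycT_swap hc
    rw [List.cons_append] at hL' hw' hc'
    obtain ⟨n, l, hl, hr⟩ := exists_flat (g := 0) (g' := 1) (by decide) (by decide) e _ hL'
    rw [hl] at hw' hc'
    right
    exact ⟨(e, n), l, hw', hr, by rw [(CycT_flat0 _ _ _).1 hc']; exact ht'⟩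
  · left
    have : ∀ x ∈ L, x.1 = 1 := by
      rintro ⟨i, e⟩ hx
      by_contra hi
      have : i = 0 := by
        simp only at hi; omega
      subst this
      exact ha ⟨e, hx⟩
    obtain ⟨N, hN⟩ := mk_only 1 L this
    exact ⟨N, hN ▸ hw⟩

theorem co_le (L : List (Fin 2 × Bool)) (s : Bool × ℤ) :
    co L s + |(en L s).2| ≤ L.length + |s.2| := by
  induction L generalizing s with
  | nil => simp [co, en]
  | cons x L ih =>
    have := ih (stp s x)
    have h2 : cs s x + |(stp s x).2| ≤ 1 + |s.2| := by
      obtain ⟨e, n⟩ := s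
      obtain ⟨i, b⟩ := x
      unfold cs stp cst
      cases e <;> cases b <;> simp only [sg] <;> split_ifs <;> simp <;> grind
    simp only [co, en, List.length_cons]
    push_cast
    linarith

theorem good_init (w : F) : Good w (cyclen w) := by
  obtain ⟨L, hL, hw⟩ := exists_cycRed w
  refine good_of_cyc hL hw fun ha => ?_
  have hs : en L (en L (true, 0)) = en L (true, 0) := en_const L ha _ _
  refine ⟨_, ?_, _, hs, rfl⟩
  have := co_le L (en L (true, 0))
  rw [hs] at this
  rw [cyclen_conj hw, cyclen_mk hL]
  linarith

theorem good_mono {w : F} {t t' : ℤ} (h : Good w t) (ht : t ≤ t') : Good w t' := by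
  rcases h with h | ⟨x, l, h1, h2, h3⟩
  · exact Or.inl h
  · exact Or.inr ⟨x, l, h1, h2, h3.trans ht⟩

theorem good_σ {w : F} {t : ℤ} (h : Good w t) : Good (σ w) (max 0 (t - 1)) := by
  rcases h with ⟨N, h⟩ | ⟨x, l, h1, h2, h3⟩
  · left
    refine ⟨N, ?_⟩
    have := isConj_map σ h
    rwa [map_zpow, σ_b] at this
  · right
    refine ⟨(x.1, x.2 + sh x.1 (hd x.1 l)), tw x.1 l,
      (isConj_map σ h1).trans (twist_flat_conj σ σ_a σ_b x l), Rd_tw _ _ h2, ?_⟩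
    have := (TT_tw x.1 (x :: l)).2.2
    simp only [tw] at this
    refine this.trans ?_
    omega

theorem hd_replicate (e : Bool) (n : ℤ) (k : ℕ) : hd e (List.replicate k (e, n)) = e := by
  cases k <;> rfl

theorem flat_replicate_zero (e : Bool) (k : ℕ) :
    flat 1 0 (List.replicate k (e, 0)) = List.replicate k (1, e) := by
  induction k with
  | zero => rfl
  | succ k ih => simp [List.replicate_succ, flat, ih, rp]

theorem Rd_replicate (e : Bool) (k : ℕ) : Rd e (List.replicate k (e, 0)) := by
  induction k with
  | zero => trivial
  | succ k ih => exact ⟨fun _ => (hd_replicate _ _ _).symm, ih⟩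

theorem tw_replicate (e : Bool) (k : ℕ) :
    tw e (List.replicate k (e, 0)) = List.replicate k (e, sg e) := by
  induction k with
  | zero => rfl
  | succ k ih => simp [List.replicate_succ, tw, ih, hd_replicate, sh]

theorem scan_replicate (e : Bool) (k : ℕ) :
    en (flat 1 0 (List.replicate k (e, sg e))) (e, 0) = (e, 0) ∧
    co (flat 1 0 (List.replicate k (e, sg e))) (e, 0) = 0 := by
  induction k with
  | zero => exact ⟨rfl, rfl⟩
  | succ k ih =>
    have : rp 0 (sg e) = [(0, e)] := by cases e <;> rfl
    simp only [List.replicate_succ, flat, this, List.cons_append, List.nil_append, en, co, stp, cs]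
    simp only [one_ne_zero, if_false, if_true, ih]
    cases e <;> simp [cst, sg]

theorem good_τ {w : F} {t : ℤ} (ht : 0 ≤ t) (h : Good w t) : Good (τ w) t := by
  -- it suffices to treat a cyclically reduced word whose scan cost is at most `t`
  have main : ∀ L : List (Fin 2 × Bool), FreeGroup.IsCyclicallyReduced L →
      IsConj w (FreeGroup.mk L) → (∃ e, (1, e) ∈ L) → (∃ t' ≤ t, CycT L t') → Good (τ w) t := by
    intro L hL hw hb hc
    obtain ⟨e, he⟩ := hb
    obtain ⟨t', ht', hc⟩ := hc
    obtain ⟨P, Q, rfl⟩ := List.append_of_mem he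
    have hL' := cycRed_swap hL
    have hw' := hw.trans (isConj_mk_append _ _)
    have hc' := CycT_swap hc
    rw [List.cons_append] at hL' hw' hc'
    obtain ⟨n, l, hl, hr⟩ := exists_flat (g := 1) (g' := 0) (by decide) (by decide) e _ hL'
    rw [hl] at hw' hc'
    refine good_of_cyc (L := flat 1 0 (tw e ((e, n) :: l)))
      ((cycRed_flat (by decide) _ _).2 (Rd_tw _ _ hr))
      ((isConj_map τ hw').trans (twist_flat_conj τ τ_b τ_a _ _)) fun ha => ?_
    obtain ⟨t'', h1, h2⟩ := sim_cyc (e, n) l hr t' hc' ha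
    exact ⟨t'', h1.trans ht', h2⟩
  rcases h with ⟨N, h⟩ | ⟨x, l, h1, h2, h3⟩
  · have hτ := isConj_map τ h
    rw [map_zpow, τ_b] at hτ
    by_cases hN : N = 0
    · left
      exact ⟨0, by simpa [hN] using hτ⟩
    · have hk : N.natAbs ≠ 0 := by omega
      obtain ⟨k, hk⟩ := Nat.exists_eq_add_one_of_ne_zero hk
      set e := decide (0 < N) with he
      have hw : IsConj w (FreeGroup.mk (flat 1 0 (List.replicate (k + 1) (e, 0)))) := by
        rw [flat_replicate_zero, he, ← hk]
        have := mk_rp 1 N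
        unfold rp at this
        rwa [this]
      have h2 := (isConj_map τ hw).trans (twist_flat_conj τ τ_b τ_a _ _)
      have hr := Rd_tw e _ (Rd_replicate e (k + 1))
      rw [← List.replicate_succ] at h2
      refine good_of_cyc ?_ h2 fun _ => ⟨0, ht, (e, 0), ?_⟩
      · exact (cycRed_flat (by decide) _ _).2 hr
      · rw [tw_replicate]
        exact scan_replicate e (k + 1)
  · by_cases hb : ∃ e, (1, e) ∈ flat 0 1 (x :: l)
    · exact main _ ((cycRed_flat (by decide) _ _).2 h2) h1 hb ⟨_, h3, (CycT_flat0 _ _ _).2 rfl⟩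
    · right
      refine ⟨x, l, ?_, h2, h3⟩
      have : ∀ y ∈ flat 0 1 (x :: l), y.1 = 0 := by
        rintro ⟨i, e⟩ hx
        by_contra hi
        have : i = 1 := by
          simp only at hi; omega
        subst this
        exact hb ⟨e, hx⟩
      obtain ⟨N, hN⟩ := mk_only 0 _ this
      have := isConj_map τ h1
      rw [hN] at this ⊢
      rwa [map_zpow, τ_a] at this

theorem good_σ_pow {w : F} {t : ℤ} (n : ℕ) (h : Good w t) :
    Good ((σ ^ n) w) (max 0 (t - n)) := by
  induction n with
  | zero => exact good_mono h (by simp)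
  | succ n ih =>
    rw [pow_succ', MulAut.mul_apply]
    refine good_mono (good_σ ih) ?_
    push_cast
    omega

theorem good_τ_pow {w : F} {t : ℤ} (n : ℕ) (h : Good w t) (ht : 0 ≤ t) :
    Good ((τ ^ n) w) t := by
  induction n with
  | zero => exact h
  | succ n ih =>
    rw [pow_succ', MulAut.mul_apply]
    exact good_τ ht ih

theorem good_chain {w : F} {t : ℤ} (c : List (ℕ × ℕ)) (h : Good w t) (ht : 0 ≤ t) :
    Good (chainC1 c w) (max 0 (t - sigmaCount c)) := by
  induction c with
  | nil => exact good_mono h (by simp [sigmaCount])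
  | cons p c ih =>
    have e1 : chainC1 (p :: c) w = (τ ^ p.2) ((σ ^ p.1) (chainC1 c w)) := by
      simp [chainC1, MulAut.mul_apply]
    have e2 : sigmaCount (p :: c) = p.1 + sigmaCount c := by simp [sigmaCount]
    rw [e1, e2]
    refine good_mono (good_τ_pow p.2 (good_σ_pow p.1 ih) (by omega)) ?_
    push_cast
    omega

theorem good_linear {w : F} (h : Good w 0) :
    ∃ c : ℕ, ∀ k : ℕ, cyclen ((σ ^ k) w) = cyclen w + k * c := by
  rcases h with ⟨N, h⟩ | ⟨x, l, h1, h2, h3⟩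
  · refine ⟨0, fun k => ?_⟩
    have : (σ ^ k) (FreeGroup.of 1 ^ N) = FreeGroup.of 1 ^ N := by
      induction k with
      | zero => rfl
      | succ k ih => rw [pow_succ', MulAut.mul_apply, ih, map_zpow, σ_b]
    rw [cyclen_conj (isConj_map (σ ^ k) h), this, cyclen_conj h]
    simp
  · refine ⟨CC x.1 (x :: l), fun k => ?_⟩
    suffices hs : ∃ y l', y.1 = x.1 ∧ IsConj ((σ ^ k) w) (FreeGroup.mk (flat 0 1 (y :: l'))) ∧
        Rd x.1 (y :: l') ∧ TT x.1 (y :: l') ≤ 0 ∧ CC x.1 (y :: l') = CC x.1 (x :: l) ∧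
        (flat 0 1 (y :: l')).length = (flat 0 1 (x :: l)).length + k * CC x.1 (x :: l) by
      obtain ⟨y, l', e, c1, c2, -, -, c4⟩ := hs
      rw [cyclen_conj c1, cyclen_conj h1, cyclen_mk ((cycRed_flat (by decide) _ _).2 h2),
        cyclen_mk ((cycRed_flat (by decide) _ _).2 (e ▸ c2)), c4]
    induction k with
    | zero => exact ⟨x, l, rfl, h1, h2, h3, rfl, by simp⟩
    | succ k ih =>
      obtain ⟨y, l', e, c1, c2, c3, c4, c5⟩ := ih
      refine ⟨(y.1, y.2 + sh y.1 (hd x.1 l')), tw x.1 l', e, ?_, Rd_tw _ _ c2, ?_, ?_, ?_⟩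
      · rw [pow_succ', MulAut.mul_apply]
        refine (isConj_map σ c1).trans ?_
        have := twist_flat_conj σ σ_a σ_b y l'
        rw [e] at this
        simpa only [tw] using this
      · have := (TT_tw x.1 (y :: l')).2.2
        simp only [tw] at this
        omega
      · rw [← c4]; exact CC_tw x.1 (y :: l')
      · have := length_flat_tw 0 1 x.1 (y :: l') c3
        simp only [tw] at this
        rw [this, c5, c4]; ring

theorem step_iff {w : F} (h : Good w 0) (k : ℕ) :
    cyclen ((σ ^ (k + 1)) w) = cyclen ((σ ^ k) w) ↔ cyclen (σ w) = cyclen w := by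
  obtain ⟨c, hc⟩ := good_linear h
  have h1 := hc 1
  rw [pow_one] at h1
  rw [hc, hc, h1, add_mul]
  omega

/-- Corollary 4.5 (i):  here `k = ‖u‖ + 1`. -/
theorem stmt9 (u v : F) (huv : cyclen v ≤ cyclen u)
    (c : List (ℕ × ℕ)) (hne : c ≠ [])
    (H : ∀ c' : List (ℕ × ℕ), c' ≠ [] → chainLen c' ≤ chainLen c →
      ((cyclen ((σ ^ (cyclen u + 2)) (chainC1 c' u)) = cyclen ((σ ^ (cyclen u + 1)) (chainC1 c' u)) ↔
        cyclen ((σ ^ (cyclen u + 2)) (chainC1 c' v)) = cyclen ((σ ^ (cyclen u + 1)) (chainC1 c' v))) ∧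
       (cyclen ((τ ^ (cyclen u + 2)) (chainC1 c' u)) = cyclen ((τ ^ (cyclen u + 1)) (chainC1 c' u)) ↔
        cyclen ((τ ^ (cyclen u + 2)) (chainC1 c' v)) = cyclen ((τ ^ (cyclen u + 1)) (chainC1 c' v)))))
    (hσ : cyclen u + 1 ≤ sigmaCount c) :
    cyclen (σ (chainC1 c u)) = cyclen (chainC1 c u) ↔
      cyclen (σ (chainC1 c v)) = cyclen (chainC1 c v) := by
  have hu : Good (chainC1 c u) 0 :=
    good_mono (good_chain c (good_init u) (by omega)) (by omega)
  have hv : Good (chainC1 c v) 0 :=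
    good_mono (good_chain c (good_init v) (by omega)) (by omega)
  have := (H c hne le_rfl).1
  rw [step_iff hu (cyclen u + 1), step_iff hv (cyclen u + 1)] at this
  exact this
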